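/- arXiv:1804.00221 — 2 statements merged into one kernel-verified Lean document; each statement's English description precedes it below -/
import Mathlib

section
/- Let b ≥ 5 and a ≥ 2 be integers such that a² divides b and b is not a rational power of a. Then the block complexity of the leading digit sequence of a^n in base b satisfies p_{a,b}(3) − p_{a,b}(2) ≠ p_{a,b}(2) − p_{a,b}(1); in particular p_{a,b}(n) is not a linear function of n for n ≥ 1. -/
/-- The leading digit of `x` in base `b`: the unique `d ∈ {1,…,b-1}` with
`d · b^k ≤ x < (d+1) · b^k` for some integer `k` (here `k = ⌊log_b x⌋`). -/
noncomputable def leadingDigit (b : ℕ) (x : ℝ) : ℕ :=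
  (⌊x / (b : ℝ) ^ (⌊Real.logb b x⌋ : ℤ)⌋).toNat

/-- The block complexity of the leading digit sequence of `a^n` in base `b`:
the number of distinct blocks of length `n`. -/
noncomputable def blockComplexity (a : ℝ) (b : ℕ) (n : ℕ) : ℕ :=
  Set.ncard {w : Fin n → ℕ |
    ∃ m : ℕ, 1 ≤ m ∧ ∀ i : Fin n, w i = leadingDigit b (a ^ (m + (i : ℕ)))}

/-!
The powers of `a`, scaled by powers of `b` into `[1, b)`, are dense there, and leading digits are
locally constant to the right. So the blocks of length `n + 1` are exactly those of the sequences
`x, a x, …, a ^ n x` with `x ∈ [1, b)`. Let `s ≤ n` be the last index with `a ^ s x < b`, and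
`k = ⌊a ^ s x⌋`. If `a ^ n ∣ b`, the pair `(s, k)` determines the block. Conversely `s` is the first
index below `n` whose digit is at least `b / a` (or `n`, if there is none), and `k` is the digit at
`s`. As `k` ranges over `[b / a, b)` if `s < n` and over `[a ^ n, b)` if `s = n`,
`p (n + 1) = n (b - b / a) + (b - a ^ n)`, and `p 3 - 2 p 2 + p 1 = -(a - 1) ^ 2`.
-/

open Set Filter Topology

section LeadingDigit

variable {b : ℕ} {x : ℝ}

lemma leadingDigit_mul_zpow (hb : 1 < b) (hx : x ≠ 0) (j : ℤ) :
    leadingDigit b (x * (b : ℝ) ^ j) = leadingDigit b x := by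
  have hb1 : (1 : ℝ) < b := by exact_mod_cast hb
  have hb0 : (b : ℝ) ≠ 0 := by positivity
  have hlog : Real.logb b (x * (b : ℝ) ^ j) = Real.logb b x + j := by
    rw [Real.logb_mul hx (zpow_ne_zero j hb0), ← Real.rpow_intCast,
      Real.logb_rpow (by positivity) hb1.ne']
  rw [leadingDigit, leadingDigit, hlog, Int.floor_add_intCast, zpow_add₀ hb0,
    mul_div_mul_right _ _ (zpow_ne_zero j hb0)]

lemma leadingDigit_eq_floor (hx : x ∈ Ico 1 (b : ℝ)) : leadingDigit b x = ⌊x⌋₊ := by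
  have hb1 : (1 : ℝ) < b := hx.1.trans_lt hx.2
  have hx0 : 0 < x := one_pos.trans_le hx.1
  have hfloor : ⌊Real.logb b x⌋ = 0 := by
    rw [Int.floor_eq_zero_iff]
    refine ⟨Real.logb_nonneg hb1 hx.1, ?_⟩
    rw [Real.logb_lt_iff_lt_rpow hb1 hx0, Real.rpow_one]
    exact hx.2
  rw [leadingDigit, hfloor, zpow_zero, div_one, Int.floor_toNat]

lemma leadingDigit_div_natCast {d : ℕ} (hd : 0 < d) (hx : x ∈ Ico (d : ℝ) b) :
    leadingDigit b (x / d) = ⌊x⌋₊ / d := by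
  have hd1 : (1 : ℝ) ≤ d := by exact_mod_cast hd
  have hx0 : 0 ≤ x := d.cast_nonneg.trans hx.1
  rw [← Nat.floor_div_natCast]
  exact leadingDigit_eq_floor
    ⟨(one_le_div (by positivity)).2 hx.1, (div_le_self hx0 hd1).trans_lt hx.2⟩

lemma exists_mul_zpow_mem_Ico (hb : 1 < b) (hx : 0 < x) :
    ∃ j : ℤ, x * (b : ℝ) ^ j ∈ Ico 1 (b : ℝ) := by
  have hb1 : (1 : ℝ) < b := by exact_mod_cast hb
  have hb0 : (0 : ℝ) < b := one_pos.trans hb1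
  obtain ⟨j, hle, hlt⟩ := exists_mem_Ico_zpow hx hb1
  have hj : 0 < (b : ℝ) ^ j := zpow_pos hb0 j
  refine ⟨-j, ?_, ?_⟩ <;> rw [zpow_neg, ← div_eq_mul_inv]
  · exact (one_le_div hj).2 hle
  · rwa [div_lt_iff₀ hj, ← zpow_one_add₀ hb0.ne', add_comm]

lemma eventually_leadingDigit_eq (hb : 1 < b) (hx : 0 < x) :
    ∀ᶠ y in 𝓝[≥] x, leadingDigit b y = leadingDigit b x := by
  have hb0 : (0 : ℝ) < b := by positivity
  obtain ⟨j, hj⟩ := exists_mul_zpow_mem_Ico hb hx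
  have hscale : Tendsto (fun y : ℝ ↦ y * (b : ℝ) ^ j) (𝓝[≥] x) (𝓝[≥] (x * (b : ℝ) ^ j)) :=
    (continuous_mul_const _).continuousWithinAt.tendsto_nhdsWithin
      fun _ hy ↦ mul_le_mul_of_nonneg_right hy (zpow_pos hb0 j).le
  have hfloor := hscale.eventually
    (tendsto_pure.1 (tendsto_floor_right_pure_floor (x * (b : ℝ) ^ j)))
  have hlt := hscale.eventually (Ico_mem_nhdsGE hj.2)
  filter_upwards [self_mem_nhdsWithin, hfloor, hlt] with y hxy hfloor hy
  rw [← leadingDigit_mul_zpow hb (hx.trans_le hxy).ne' j, ← leadingDigit_mul_zpow hb hx.ne' j,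
    leadingDigit_eq_floor ⟨hj.1.trans hy.1, hy.2⟩, leadingDigit_eq_floor hj,
    ← Int.floor_toNat, ← Int.floor_toNat, hfloor]

end LeadingDigit

section Density

variable {a b : ℝ}

lemma irrational_logb_of_forall_ne_rpow (ha : 1 < a) (hb : 1 < b)
    (h : ∀ q : ℚ, 0 < q → b ≠ a ^ (q : ℝ)) : Irrational (Real.logb b a) := by
  rintro ⟨q, hq⟩
  have hq0 : (0 : ℝ) < q := hq ▸ Real.logb_pos hb ha
  refine h q⁻¹ (inv_pos.2 (by exact_mod_cast hq0)) ?_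
  rw [Rat.cast_inv, hq, Real.inv_logb, Real.rpow_logb (by positivity) ha.ne' (by positivity)]

lemma exists_pow_mul_zpow_mem_Ioo (ha : 0 < a) (hb : 1 < b) (hirr : Irrational (Real.logb b a))
    {l r : ℝ} (hl : 0 < l) (hlr : l < r) : ∃ (m : ℕ) (j : ℤ), a ^ m * b ^ j ∈ Ioo l r := by
  have hb0 : 0 < b := one_pos.trans hb
  have hdense : DenseRange (· • (Real.logb b a : UnitAddCircle) : ℕ → UnitAddCircle) :=
    denseRange_zsmul_iff_nsmul.1 (AddCircle.denseRange_zsmul_coe_iff.2 (by rwa [div_one]))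
  have hopen : IsOpen ((QuotientAddGroup.mk : ℝ → UnitAddCircle) ''
      Ioo (Real.logb b l) (Real.logb b r)) := QuotientAddGroup.isOpenMap_coe _ isOpen_Ioo
  obtain ⟨m, y, ⟨hly, hyr⟩, hm⟩ := hdense.exists_mem_open hopen
    ((nonempty_Ioo.2 (Real.logb_lt_logb hb hl hlr)).image _)
  rw [← AddCircle.coe_nsmul] at hm
  obtain ⟨j, hj⟩ := AddSubgroup.mem_zmultiples_iff.1 (QuotientAddGroup.eq.1 hm.symm)
  have hy : a ^ m * b ^ j = b ^ y := by
    have hexp : y = Real.logb b a * m + j := by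
      simp only [zsmul_eq_mul, nsmul_eq_mul] at hj
      linarith
    rw [hexp, Real.rpow_add hb0, Real.rpow_mul hb0.le, Real.rpow_logb hb0 hb.ne' ha,
      Real.rpow_natCast, Real.rpow_intCast]
  refine ⟨m, j, ?_⟩
  rw [hy]
  exact ⟨(Real.logb_lt_iff_lt_rpow hb hl).1 hly, (Real.lt_logb_iff_rpow_lt hb (hl.trans hlr)).1 hyr⟩

end Density

section DigitBlock

/-- The block of leading digits in base `b` of the `n` numbers `x, a x, …, a ^ (n - 1) x`. -/
noncomputable def digitBlock (a : ℝ) (b n : ℕ) (x : ℝ) : Fin n → ℕ :=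
  fun i ↦ leadingDigit b (a ^ (i : ℕ) * x)

variable {a : ℝ} {b n : ℕ} {x : ℝ}

lemma digitBlock_mul_zpow (ha : a ≠ 0) (hb : 1 < b) (hx : x ≠ 0) (j : ℤ) :
    digitBlock a b n (x * (b : ℝ) ^ j) = digitBlock a b n x := by
  funext i
  rw [digitBlock, digitBlock, ← mul_assoc,
    leadingDigit_mul_zpow hb (mul_ne_zero (pow_ne_zero _ ha) hx)]

lemma eventually_digitBlock_eq (ha : 0 < a) (hb : 1 < b) (hx : 0 < x) :
    ∀ᶠ y in 𝓝[≥] x, digitBlock a b n y = digitBlock a b n x := by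
  simp only [funext_iff, eventually_all]
  intro i
  have hai : 0 < a ^ (i : ℕ) := pow_pos ha i
  have hscale : Tendsto (fun y ↦ a ^ (i : ℕ) * y) (𝓝[≥] x) (𝓝[≥] (a ^ (i : ℕ) * x)) :=
    (continuous_const_mul _).continuousWithinAt.tendsto_nhdsWithin
      fun _ hy ↦ mul_le_mul_of_nonneg_left hy hai.le
  exact hscale.eventually (eventually_leadingDigit_eq hb (mul_pos hai hx))

lemma exists_digitBlock_pow_eq (ha : 0 < a) (hb : 1 < b) (hirr : Irrational (Real.logb b a))
    (hx : 0 < x) : ∃ m : ℕ, 1 ≤ m ∧ digitBlock a b n (a ^ m) = digitBlock a b n x := by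
  obtain ⟨r, hxr, hr⟩ := mem_nhdsGE_iff_exists_Ico_subset.1 (eventually_digitBlock_eq ha hb hx)
  obtain ⟨m, j, hlt, hgt⟩ := exists_pow_mul_zpow_mem_Ioo ha (by exact_mod_cast hb) hirr
    (div_pos hx ha) (div_lt_div_of_pos_right hxr ha)
  have hmem : a ^ (m + 1) * (b : ℝ) ^ j ∈ Ico x r := by
    rw [pow_succ, mul_right_comm]
    exact ⟨((div_lt_iff₀ ha).1 hlt).le, (lt_div_iff₀ ha).1 hgt⟩
  refine ⟨m + 1, m.succ_pos, ?_⟩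
  rw [← digitBlock_mul_zpow ha.ne' hb (pow_pos ha _).ne' j]
  exact hr hmem

lemma blockComplexity_eq_ncard_image (ha : 0 < a) (hb : 1 < b)
    (hirr : Irrational (Real.logb b a)) (n : ℕ) :
    blockComplexity a b n = (digitBlock a b n '' Ico 1 (b : ℝ)).ncard := by
  rw [blockComplexity]
  congr 1
  ext w
  have hblock (m : ℕ) : (∀ i : Fin n, w i = leadingDigit b (a ^ (m + (i : ℕ)))) ↔
      digitBlock a b n (a ^ m) = w := by
    simp only [funext_iff, digitBlock, ← pow_add, add_comm m, eq_comm]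
  simp only [mem_ofPred_eq, hblock]
  constructor
  · rintro ⟨m, -, rfl⟩
    obtain ⟨j, hj⟩ := exists_mul_zpow_mem_Ico hb (pow_pos ha m)
    exact ⟨_, hj, digitBlock_mul_zpow ha.ne' hb (pow_pos ha m).ne' j⟩
  · rintro ⟨x, hx, rfl⟩
    exact exists_digitBlock_pow_eq ha hb hirr (one_pos.trans_le hx.1)

end DigitBlock

section Codes

variable {a b n s i k : ℕ} {x : ℝ}

lemma leadingDigit_pow_mul_of_le (ha : 0 < a) (his : i ≤ s) (hi : 1 ≤ (a : ℝ) ^ i * x)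
    (hs : (a : ℝ) ^ s * x < b) :
    leadingDigit b ((a : ℝ) ^ i * x) = ⌊(a : ℝ) ^ s * x⌋₊ / a ^ (s - i) := by
  have hpos : 0 < (a : ℝ) ^ (s - i) := by positivity
  have hsplit : (a : ℝ) ^ s * x = (a : ℝ) ^ i * x * (a : ℝ) ^ (s - i) := by
    rw [mul_right_comm, ← pow_add, Nat.add_sub_cancel' his]
  have hmem : (a : ℝ) ^ s * x ∈ Ico ((a ^ (s - i) : ℕ) : ℝ) b := by
    rw [Nat.cast_pow]
    exact ⟨hsplit ▸ le_mul_of_one_le_left hpos.le hi, hs⟩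
  rw [← leadingDigit_div_natCast (pow_pos ha _) hmem, hsplit, Nat.cast_pow,
    mul_div_cancel_right₀ _ hpos.ne']

lemma leadingDigit_pow_mul_of_lt (hb : 1 < b) (hsi : s < i) (hdvd : a ^ (i - s) ∣ b)
    (hs : (a : ℝ) ^ s * x < b) (hs' : b / a ≤ ⌊(a : ℝ) ^ s * x⌋₊) :
    leadingDigit b ((a : ℝ) ^ i * x) = ⌊(a : ℝ) ^ s * x⌋₊ / (b / a ^ (i - s)) := by
  have hb0 : 0 < b := one_pos.trans hb
  have hpow : 0 < a ^ (i - s) := Nat.pos_of_dvd_of_pos hdvd hb0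
  have ha : 0 < a := Nat.pos_of_ne_zero fun h ↦ by simp [h, (Nat.sub_pos_of_lt hsi).ne'] at hpow
  set d := b / a ^ (i - s)
  have hd0 : 0 < d := Nat.div_pos (Nat.le_of_dvd hb0 hdvd) hpow
  have hdx : (d : ℝ) ≤ (a : ℝ) ^ s * x :=
    (Nat.le_floor_iff' hd0.ne').1 <|
      (Nat.div_le_div_left (Nat.le_self_pow (Nat.sub_pos_of_lt hsi).ne' a) ha).trans hs'
  have hbd : (b : ℝ) = (a : ℝ) ^ (i - s) * d := by exact_mod_cast (Nat.mul_div_cancel' hdvd).symm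
  have hdR : (0 : ℝ) < d := by exact_mod_cast hd0
  have hscale : (a : ℝ) ^ i * x = (a : ℝ) ^ s * x / d * (b : ℝ) ^ (1 : ℤ) := by
    rw [zpow_one, hbd, ← Nat.add_sub_cancel' hsi.le, pow_add, Nat.add_sub_cancel_left]
    field_simp
  rw [hscale, leadingDigit_mul_zpow hb (div_pos (hdR.trans_le hdx) hdR).ne',
    leadingDigit_div_natCast hd0 ⟨hdx, hs⟩]

/-- The codes `(s, k)` of the blocks of length `n + 1` starting from `x ∈ [1, b)`: `s ≤ n` is the
last index with `a ^ s * x < b`, and `k = ⌊a ^ s * x⌋`. -/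
def blockCodes (a b n : ℕ) : Finset (Σ _ : ℕ, ℕ) :=
  (Finset.range (n + 1)).sigma fun s ↦ Finset.Ico (if s = n then a ^ n else b / a) b

/-- The block of length `n + 1` with code `(s, k)`: its digits are `⌊a ^ i * x⌋` for `i ≤ s` and
`⌊a ^ i * x / b⌋` for `s < i`, where `k = ⌊a ^ s * x⌋`. When `a ^ n ∣ b`, each of them is the
quotient of `k` by an integer. -/
def decodeBlock (a b n : ℕ) (c : Σ _ : ℕ, ℕ) : Fin (n + 1) → ℕ :=
  fun i ↦ if (i : ℕ) ≤ c.1 then c.2 / a ^ (c.1 - i) else c.2 / (b / a ^ (i - c.1))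

lemma card_blockCodes (a b n : ℕ) :
    (blockCodes a b n).card = n * (b - b / a) + (b - a ^ n) := by
  rw [blockCodes, Finset.card_sigma, Finset.sum_range_succ, if_pos rfl, Nat.card_Ico]
  congr 1
  rw [Finset.sum_congr rfl fun s hs ↦ by rw [if_neg (Finset.mem_range.1 hs).ne, Nat.card_Ico],
    Finset.sum_const, Finset.card_range, smul_eq_mul]

lemma mem_blockCodes :
    (⟨s, k⟩ : Σ _ : ℕ, ℕ) ∈ blockCodes a b n ↔
      (s = n ∧ a ^ n ≤ k ∨ s < n ∧ b / a ≤ k) ∧ k < b := by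
  rw [blockCodes, Finset.mem_sigma, Finset.mem_range, Finset.mem_Ico]
  split_ifs <;> grind

lemma pow_le_of_mem_blockCodes (ha : 0 < a) (hdvd : a ^ n ∣ b)
    (hc : (⟨s, k⟩ : Σ _ : ℕ, ℕ) ∈ blockCodes a b n) : a ^ s ≤ k := by
  obtain ⟨⟨rfl, hk⟩ | ⟨hsn, hk⟩, hkb⟩ := mem_blockCodes.1 hc
  · exact hk
  · refine le_trans ((Nat.le_div_iff_mul_le ha).2 ?_) hk
    rw [← pow_succ]
    exact (Nat.pow_le_pow_right ha hsn).trans (Nat.le_of_dvd (by omega) hdvd)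

lemma exists_mem_blockCodes (ha : 0 < a) (n : ℕ) (hx : x ∈ Ico 1 (b : ℝ)) :
    ∃ s : ℕ, (⟨s, ⌊(a : ℝ) ^ s * x⌋₊⟩ : Σ _ : ℕ, ℕ) ∈ blockCodes a b n := by
  have haR : (0 : ℝ) < a := by exact_mod_cast ha
  have hxpos : 0 < x := one_pos.trans_le hx.1
  obtain ⟨s, hsn, hs, hmax⟩ : ∃ s ≤ n, (a : ℝ) ^ s * x < b ∧
      (s < n → (b : ℝ) ≤ (a : ℝ) ^ (s + 1) * x) := by
    refine ⟨_, Nat.findGreatest_le n, Nat.findGreatest_spec (P := fun s ↦ (a : ℝ) ^ s * x < b)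
      n.zero_le (by simpa using hx.2), fun hlt ↦ not_lt.1 ?_⟩
    exact Nat.findGreatest_is_greatest (Nat.lt_succ_self _) hlt
  refine ⟨s, mem_blockCodes.2 ⟨?_, (Nat.floor_lt (by positivity)).2 hs⟩⟩
  refine hsn.eq_or_lt.imp (fun h ↦ ⟨h, ?_⟩) (fun h ↦ ⟨h, ?_⟩) <;> apply Nat.le_floor
  · rw [h, Nat.cast_pow]
    exact le_mul_of_one_le_right (by positivity) hx.1
  · refine Nat.cast_div_le.trans ((div_le_iff₀ haR).2 ?_)
    rw [mul_right_comm, ← pow_succ]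
    exact hmax h

lemma digitBlock_eq_decodeBlock (ha : 0 < a) (hb : 1 < b) (hdvd : a ^ n ∣ b) (hx : 1 ≤ x)
    (hc : (⟨s, ⌊(a : ℝ) ^ s * x⌋₊⟩ : Σ _ : ℕ, ℕ) ∈ blockCodes a b n) :
    digitBlock a b (n + 1) x = decodeBlock a b n ⟨s, ⌊(a : ℝ) ^ s * x⌋₊⟩ := by
  have haR : (1 : ℝ) ≤ a := by exact_mod_cast ha
  obtain ⟨hsn, hlt⟩ := mem_blockCodes.1 hc
  have hs : (a : ℝ) ^ s * x < b := Nat.lt_of_floor_lt hlt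
  funext i
  rw [digitBlock, decodeBlock]
  split_ifs with his
  · exact leadingDigit_pow_mul_of_le ha his
      (one_le_mul_of_one_le_of_one_le (one_le_pow₀ haR) hx) hs
  · exact leadingDigit_pow_mul_of_lt hb (not_le.1 his)
      ((pow_dvd_pow a (by omega)).trans hdvd) hs (by grind)

lemma image_digitBlock_eq_image_decodeBlock (ha : 0 < a) (hb : 1 < b) (hdvd : a ^ n ∣ b) :
    digitBlock a b (n + 1) '' Ico 1 (b : ℝ) = decodeBlock a b n '' blockCodes a b n := by
  refine Subset.antisymm ?_ ?_
  · rintro _ ⟨x, hx, rfl⟩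
    obtain ⟨s, hs⟩ := exists_mem_blockCodes ha n hx
    exact ⟨_, hs, (digitBlock_eq_decodeBlock ha hb hdvd hx.1 hs).symm⟩
  · rintro _ ⟨⟨s, k⟩, hc, rfl⟩
    have hpos : (0 : ℝ) < (a : ℝ) ^ s := by positivity
    have hak : (a : ℝ) ^ s ≤ k := by exact_mod_cast pow_le_of_mem_blockCodes ha hdvd hc
    have hkb : (k : ℝ) < b := by exact_mod_cast (mem_blockCodes.1 hc).2
    have hfloor : ⌊(a : ℝ) ^ s * (k / (a : ℝ) ^ s)⌋₊ = k := by
      rw [mul_div_cancel₀ _ hpos.ne', Nat.floor_natCast]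
    have hx : 1 ≤ (k : ℝ) / (a : ℝ) ^ s := (one_le_div hpos).2 hak
    refine ⟨k / (a : ℝ) ^ s, ⟨hx, ?_⟩, ?_⟩
    · exact (div_le_self k.cast_nonneg (one_le_pow₀ (by exact_mod_cast ha))).trans_lt hkb
    · rw [digitBlock_eq_decodeBlock (s := s) ha hb hdvd hx (by rwa [hfloor]), hfloor]

-- If `s < n`, then `s` is the first index at which the block has a digit at least `b / a`.
lemma decodeBlock_ne_of_lt (ha : 1 < a) (hdvd : a ^ n ∣ b) {t l : ℕ} (hst : s < t)
    (hs : (⟨s, k⟩ : Σ _ : ℕ, ℕ) ∈ blockCodes a b n)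
    (ht : (⟨t, l⟩ : Σ _ : ℕ, ℕ) ∈ blockCodes a b n) :
    decodeBlock a b n ⟨s, k⟩ ≠ decodeBlock a b n ⟨t, l⟩ := by
  intro h
  obtain ⟨htn, hlb⟩ := mem_blockCodes.1 ht
  have hsn : s < n := by omega
  have hk : b / a ≤ k := by
    obtain ⟨⟨rfl, -⟩ | ⟨-, hk⟩, -⟩ := mem_blockCodes.1 hs
    · exact absurd hsn (lt_irrefl _)
    · exact hk
  have hdigit : k = l / a ^ (t - s) := by
    simpa [decodeBlock, hst.le] using congrFun h ⟨s, by omega⟩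
  have hab : a ∣ b := (dvd_pow_self a (by omega)).trans hdvd
  have hlt : l / a ^ (t - s) < b / a := by
    calc l / a ^ (t - s) ≤ l / a :=
          Nat.div_le_div_left (Nat.le_self_pow (by omega) a) (by omega)
      _ < b / a := Nat.div_lt_div_of_lt_of_dvd hab hlb
  omega

lemma injOn_decodeBlock (ha : 1 < a) (hdvd : a ^ n ∣ b) :
    InjOn (decodeBlock a b n) (blockCodes a b n) := by
  rintro ⟨s, k⟩ hs ⟨t, l⟩ ht h
  obtain hst | rfl | hts := lt_trichotomy s t
  · exact absurd h (decodeBlock_ne_of_lt ha hdvd hst hs ht)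
  · have hsn : s < n + 1 := Finset.mem_range.1 (Finset.mem_sigma.1 hs).1
    simpa [decodeBlock] using congrFun h ⟨s, hsn⟩
  · exact absurd h.symm (decodeBlock_ne_of_lt ha hdvd hts ht hs)

end Codes

theorem blockComplexity_succ {a b n : ℕ} (ha : 1 < a) (hb : 1 < b) (hdvd : a ^ n ∣ b)
    (hirr : Irrational (Real.logb b a)) :
    blockComplexity a b (n + 1) = n * (b - b / a) + (b - a ^ n) := by
  have ha0 : 0 < a := one_pos.trans ha
  rw [blockComplexity_eq_ncard_image (by exact_mod_cast ha0) hb hirr,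
    image_digitBlock_eq_image_decodeBlock ha0 hb hdvd,
    (injOn_decodeBlock ha hdvd).ncard_image, ncard_coe_finset, card_blockCodes]

/-- For integers `b ≥ 5`, `a ≥ 2` with `a² ∣ b` and `b` not a rational
power of `a`, the block complexity satisfies
`p_{a,b}(3) - p_{a,b}(2) ≠ p_{a,b}(2) - p_{a,b}(1)`; in particular it is not linear. -/
theorem blockComplexity_not_linear (b a : ℕ) (hb : 5 ≤ b) (ha : 2 ≤ a)
    (hdvd : a ^ 2 ∣ b) (hnp : ∀ q : ℚ, 0 < q → (b : ℝ) ≠ (a : ℝ) ^ (q : ℝ)) :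
    (blockComplexity (a : ℝ) b 3 : ℤ) - blockComplexity (a : ℝ) b 2 ≠
      (blockComplexity (a : ℝ) b 2 : ℤ) - blockComplexity (a : ℝ) b 1 := by
  have hb1 : 1 < b := by omega
  have hirr : Irrational (Real.logb b a) :=
    irrational_logb_of_forall_ne_rpow (by exact_mod_cast ha) (by exact_mod_cast hb1) hnp
  have hp {n : ℕ} (hn : n ≤ 2) : (blockComplexity a b (n + 1) : ℤ) =
      n * (b - (b / a : ℕ)) + (b - (a : ℤ) ^ n) := by
    have hnb : a ^ n ∣ b := (pow_dvd_pow a hn).trans hdvd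
    have hle : a ^ n ≤ b := Nat.le_of_dvd (by omega) hnb
    rw [blockComplexity_succ ha hb1 hnb hirr]
    push_cast [Nat.cast_sub hle, Nat.cast_sub (Nat.div_le_self b a)]
    rfl
  have hsq : (0 : ℤ) < (a - 1) ^ 2 := pow_pos (by omega) 2
  rw [hp (n := 2) le_rfl, hp (n := 1) one_le_two, hp (n := 0) zero_le_two]
  push_cast
  intro h
  linarith
end

section
/- Let b ≥ 5 be squarefree and a a positive rational not an integral power of b, with a = (r/s)·b^k in lowest terms and 1 < r/s < b. Then the slope c_{a,b} = b − 1 − ⌊(b−1)/r⌋ − ⌊(gcd(b,r)−1)/s⌋ satisfies ⌊(b−1)/2⌋ ≤ c_{a,b} ≤ b − 1, and consequently ⌊(b−1)/2⌋·n + ⌈(b−1)/2⌉ ≤ p_{a,b}(n) ≤ (b−1)·n for all n ≥ 1. -/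
/-!
Put `α = log_b a`. The `i`-th digit of the block starting at `a ^ m` is determined by the point
`m α + i α` of the circle `ℝ / ℤ`, which the points `log_b d`, `0 < d < b`, cut into digit arcs.
So the block of length `n` is determined by the position of `m α` relative to the breakpoints
`log_b d - i α`, `i < n`. Since `α` is irrational, every arc between consecutive breakpoints is
visited, and since the digit arcs are shorter than half the circle (`b > 4`), different arcs give
different blocks. Hence the complexity is the number of breakpoints.

Passing from `n` to `n + 1` adds the `b - 1` points `log_b d - n α`, some of which may already be
present: that requires `d / e = (r / (b s)) ^ i * b ^ l` for some digit `e` and some `i ≥ 1`.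
Comparing sizes gives `l ≥ 0`, and comparing prime factors shows that `r ∣ d`, or that `l = 0` and
`r / gcd(b, r) ∣ d` with `d s < r`. These are the two families of digits subtracted in the slope.
-/

section LeadingDigit

variable {b : ℕ}

lemma leadingDigit_rpow (hb : 1 < b) (x : ℝ) :
    leadingDigit b ((b : ℝ) ^ x) = ⌊(b : ℝ) ^ Int.fract x⌋₊ := by
  have hb' : (1 : ℝ) < b := by exact_mod_cast hb
  rw [leadingDigit, Real.logb_rpow (by linarith) hb'.ne', ← Real.rpow_intCast,
    ← Real.rpow_sub (by linarith), Int.self_sub_floor, Int.floor_toNat]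

lemma leadingDigit_rpow_pos (hb : 1 < b) (x : ℝ) : 0 < leadingDigit b ((b : ℝ) ^ x) := by
  rw [leadingDigit_rpow hb, Nat.floor_pos]
  exact Real.one_le_rpow (by exact_mod_cast hb.le) (Int.fract_nonneg x)

lemma leadingDigit_rpow_lt (hb : 1 < b) (x : ℝ) : leadingDigit b ((b : ℝ) ^ x) < b := by
  rw [leadingDigit_rpow hb, Nat.floor_lt (by positivity)]
  exact Real.rpow_lt_self_of_one_lt (by exact_mod_cast hb) (Int.fract_lt_one x)

lemma leadingDigit_rpow_eq_iff (hb : 1 < b) {d : ℕ} (hd : 0 < d) {x : ℝ} :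
    leadingDigit b ((b : ℝ) ^ x) = d ↔
      Int.fract x ∈ Set.Ico (Real.logb b d) (Real.logb b (d + 1)) := by
  have hb' : (1 : ℝ) < b := by exact_mod_cast hb
  rw [leadingDigit_rpow hb, Nat.floor_eq_iff' hd.ne', Set.mem_Ico,
    Real.logb_le_iff_le_rpow hb' (by positivity), Real.lt_logb_iff_rpow_lt hb' (by positivity)]

lemma fract_mem_Ico_logb_leadingDigit (hb : 1 < b) (x : ℝ) :
    Int.fract x ∈ Set.Ico (Real.logb b (leadingDigit b ((b : ℝ) ^ x)))
      (Real.logb b (leadingDigit b ((b : ℝ) ^ x) + 1)) :=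
  (leadingDigit_rpow_eq_iff hb (leadingDigit_rpow_pos hb x)).1 rfl

lemma logb_natCast_nonneg (b d : ℕ) : 0 ≤ Real.logb b d :=
  div_nonneg (Real.log_natCast_nonneg d) (Real.log_natCast_nonneg b)

lemma fract_logb_natCast {d : ℕ} (hd : 0 < d) (hdb : d < b) :
    Int.fract (Real.logb b d) = Real.logb b d := by
  have hb' : (1 : ℝ) < b := by exact_mod_cast (show 1 < b by omega)
  refine Int.fract_eq_self.2 ⟨logb_natCast_nonneg b d, ?_⟩
  rw [Real.logb_lt_iff_lt_rpow hb' (by positivity), Real.rpow_one]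
  exact_mod_cast hdb

lemma leadingDigit_rpow_add (hb : 1 < b) {x t : ℝ}
    (h : Int.fract x + t ∈ Set.Ico (Real.logb b (leadingDigit b ((b : ℝ) ^ x)))
      (Real.logb b (leadingDigit b ((b : ℝ) ^ x) + 1))) :
    leadingDigit b ((b : ℝ) ^ (x + t)) = leadingDigit b ((b : ℝ) ^ x) := by
  have hb' : (1 : ℝ) < b := by exact_mod_cast hb
  have hpos := leadingDigit_rpow_pos hb x
  have hlt : (leadingDigit b ((b : ℝ) ^ x) + 1 : ℝ) ≤ b := by
    exact_mod_cast leadingDigit_rpow_lt hb x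
  generalize leadingDigit b ((b : ℝ) ^ x) = d at *
  have hfract : Int.fract (x + t) = Int.fract x + t := by
    refine Int.fract_eq_iff.2 ⟨(logb_natCast_nonneg b d).trans h.1, h.2.trans_le ?_, ⌊x⌋, ?_⟩
    · rwa [Real.logb_le_iff_le_rpow hb' (by positivity), Real.rpow_one]
    · rw [Int.fract]; ring
  rwa [leadingDigit_rpow_eq_iff hb hpos, hfract]

lemma logb_add_one_sub_logb_lt_half (hb : 4 < b) {d : ℕ} (hd : 0 < d) :
    Real.logb b (d + 1) - Real.logb b d < 1 / 2 := by
  have hb' : (4 : ℝ) < b := by exact_mod_cast hb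
  have hd' : (1 : ℝ) ≤ d := by exact_mod_cast hd
  have h_two : Real.logb b 2 < 1 / 2 := by
    have : Real.logb b 4 < 1 := by
      rwa [Real.logb_lt_iff_lt_rpow (by linarith) (by norm_num), Real.rpow_one]
    rw [show (4 : ℝ) = 2 ^ 2 by norm_num, Real.logb_pow] at this
    push_cast at this
    linarith
  calc Real.logb b (d + 1) - Real.logb b d = Real.logb b ((d + 1) / d) :=
        (Real.logb_div (by positivity) (by positivity)).symm
    _ ≤ Real.logb b 2 := by
        refine Real.logb_le_logb_of_le (by linarith) (by positivity) ?_
        rw [div_le_iff₀ (by positivity)]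
        linarith
    _ < 1 / 2 := h_two

lemma fract_sub_fract_lt_half (hb : 4 < b) {x y : ℝ}
    (h : leadingDigit b ((b : ℝ) ^ x) = leadingDigit b ((b : ℝ) ^ y)) :
    Int.fract x - Int.fract y < 1 / 2 := by
  have hx := (fract_mem_Ico_logb_leadingDigit (by omega : 1 < b) x).2
  have hy := (fract_mem_Ico_logb_leadingDigit (by omega : 1 < b) y).1
  rw [h] at hx
  linarith [logb_add_one_sub_logb_lt_half hb (leadingDigit_rpow_pos (by omega : 1 < b) y)]

end LeadingDigit

section Breakpoints

variable {b n : ℕ} {α : ℝ}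

/-- The block of length `n` read at the point `x` of the circle `ℝ / ℤ` under rotation by `α`: its
`i`-th letter is the leading digit of `b ^ (x + i α)`. For `α = log_b a` and `x = m α` this is the
block of the leading digit sequence of `a` starting at position `m`. -/
noncomputable def digitWord (b : ℕ) (α : ℝ) (n : ℕ) (x : ℝ) : Fin n → ℕ :=
  fun i => leadingDigit b ((b : ℝ) ^ (x + (i : ℕ) * α))

/-- The points of the circle, represented in `[0, 1)`, at which one of the `n` letters of
`digitWord b α n` changes. -/
noncomputable def breakpoints (b : ℕ) (α : ℝ) (n : ℕ) : Finset ℝ :=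
  (Finset.range n ×ˢ Finset.Ioo 0 b).image fun q => Int.fract (Real.logb b q.2 - q.1 * α)

lemma mem_breakpoints {p : ℝ} :
    p ∈ breakpoints b α n ↔
      ∃ i < n, ∃ d, 0 < d ∧ d < b ∧ Int.fract (Real.logb b d - i * α) = p := by
  simp only [breakpoints, Finset.mem_image, Finset.mem_product, Finset.mem_range, Finset.mem_Ioo,
    Prod.exists]
  grind

lemma fract_of_mem_breakpoints {p : ℝ} (hp : p ∈ breakpoints b α n) : Int.fract p = p := by
  obtain ⟨_, _, _, _, _, rfl⟩ := mem_breakpoints.1 hp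
  exact Int.fract_fract _

lemma zero_mem_breakpoints (hb : 1 < b) (hn : 0 < n) : 0 ∈ breakpoints b α n :=
  mem_breakpoints.2 ⟨0, hn, 1, one_pos, hb, by simp⟩

lemma card_breakpoints_le (b : ℕ) (α : ℝ) (n : ℕ) : (breakpoints b α n).card ≤ (b - 1) * n := by
  refine Finset.card_image_le.trans_eq ?_
  rw [Finset.card_product, Finset.card_range, Nat.card_Ioo, Nat.sub_zero, mul_comm]

lemma digitWord_congr (hb : 1 < b) {x y : ℝ} (h : Int.fract x = Int.fract y) :
    digitWord b α n x = digitWord b α n y := by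
  funext i
  obtain ⟨z, hz⟩ := Int.fract_eq_fract.1 h
  have : Int.fract (x + (i : ℕ) * α) = Int.fract (y + (i : ℕ) * α) :=
    Int.fract_eq_fract.2 ⟨z, by rw [← hz]; ring⟩
  rw [digitWord, digitWord, leadingDigit_rpow hb, leadingDigit_rpow hb, this]

/-- The point sought is the last breakpoint before `x`. -/
lemma exists_mem_breakpoints_digitWord_eq (hb : 1 < b) (hn : 0 < n) (x : ℝ) :
    ∃ p ∈ breakpoints b α n, digitWord b α n p = digitWord b α n x := by
  wlog hx : Int.fract x = x generalizing x
  · obtain ⟨p, hp, h⟩ := this _ (Int.fract_fract x)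
    exact ⟨p, hp, h.trans (digitWord_congr hb (Int.fract_fract x))⟩
  obtain ⟨hx0, hx1⟩ := Int.fract_eq_self.1 hx
  obtain ⟨p, hp, hmax⟩ := ((breakpoints b α n).filter (· ≤ x)).exists_max_image id
    ⟨0, Finset.mem_filter.2 ⟨zero_mem_breakpoints hb hn, hx0⟩⟩
  obtain ⟨hpb, hpx⟩ := Finset.mem_filter.1 hp
  refine ⟨p, hpb, funext fun i => ?_⟩
  set y := x + (i : ℕ) * α with hy
  set d := leadingDigit b ((b : ℝ) ^ y)
  obtain ⟨hlow, hhigh⟩ := fract_mem_Ico_logb_leadingDigit hb y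
  have hle : x - (Int.fract y - Real.logb b d) ≤ p := by
    by_contra! hlt
    have hp0 : 0 ≤ p := fract_of_mem_breakpoints hpb ▸ Int.fract_nonneg p
    have hmem : x - (Int.fract y - Real.logb b d) ∈ breakpoints b α n :=
      mem_breakpoints.2 ⟨i, i.2, d, leadingDigit_rpow_pos hb y, leadingDigit_rpow_lt hb y,
        Int.fract_eq_iff.2 ⟨by linarith, by linarith, -⌊y⌋, by rw [Int.fract]; push_cast; linarith⟩⟩
    exact hlt.not_ge (hmax _ (Finset.mem_filter.2 ⟨hmem, by linarith⟩))
  have hshift : p + (i : ℕ) * α = y + (p - x) := by rw [hy]; ring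
  rw [digitWord, digitWord, hshift]
  exact leadingDigit_rpow_add hb ⟨by linarith, by linarith⟩

lemma le_of_digitWord_eq (hb : 4 < b) {p q : ℝ} (hq : q ∈ breakpoints b α n)
    (h : digitWord b α n p = digitWord b α n q) (hqp : q - p < 1 / 2) : q ≤ p := by
  obtain ⟨i, hi, d, hd, hdb, hqd⟩ := mem_breakpoints.1 hq
  by_contra! hpq
  have hfract_q : Int.fract (q + i * α) = Real.logb b d := by
    rw [← fract_logb_natCast hd hdb, ← hqd, Int.fract_eq_fract]
    exact ⟨-⌊Real.logb b d - i * α⌋, by rw [Int.fract]; push_cast; ring⟩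
  have hdigit_q : leadingDigit b ((b : ℝ) ^ (q + i * α)) = d := by
    rw [leadingDigit_rpow_eq_iff (by omega) hd, hfract_q]
    exact Set.left_mem_Ico.2 <|
      Real.logb_lt_logb (by exact_mod_cast (by omega : 1 < b)) (by positivity) (by linarith)
  have hdigit_p := (congrFun h ⟨i, hi⟩).trans hdigit_q
  have hfract_p := (leadingDigit_rpow_eq_iff (by omega) hd).1 hdigit_p
  have hlt := fract_sub_fract_lt_half hb (hdigit_p.trans hdigit_q.symm)
  have hz : ((⌊q + i * α⌋ - ⌊p + i * α⌋ : ℤ) : ℝ) =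
      (q - p) + (Int.fract (p + i * α) - Int.fract (q + i * α)) := by
    simp only [Int.fract]; push_cast; ring
  have hz0 : (0 : ℤ) < ⌊q + i * α⌋ - ⌊p + i * α⌋ := by
    rify; push_cast at hz; linarith [hfract_p.1]
  have hz1 : ⌊q + i * α⌋ - ⌊p + i * α⌋ < (1 : ℤ) := by
    rify; push_cast at hz; linarith
  omega

lemma injOn_digitWord (hb : 4 < b) (hn : 0 < n) :
    Set.InjOn (digitWord b α n) (breakpoints b α n) := by
  have sub_lt : ∀ p ∈ breakpoints b α n, ∀ q ∈ breakpoints b α n,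
      digitWord b α n p = digitWord b α n q → p - q < 1 / 2 := by
    intro p hp q hq h
    have h₀ := congrFun h ⟨0, hn⟩
    simp only [digitWord, Nat.cast_zero, zero_mul, add_zero] at h₀
    simpa only [fract_of_mem_breakpoints hp, fract_of_mem_breakpoints hq] using
      fract_sub_fract_lt_half hb h₀
  intro p hp q hq h
  exact le_antisymm (le_of_digitWord_eq hb hp h.symm (sub_lt p hp q hq h))
    (le_of_digitWord_eq hb hq h (sub_lt q hq p hp h.symm))

end Breakpoints

section Complexity

open Topology

variable {b n : ℕ} {α a : ℝ}

lemma eventually_digitWord_eq (hb : 1 < b) (p : ℝ) :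
    ∀ᶠ x in 𝓝[≥] p, digitWord b α n x = digitWord b α n p := by
  simp only [funext_iff, Filter.eventually_all]
  intro i
  set y := p + (i : ℕ) * α with hy
  obtain ⟨hlow, hhigh⟩ := fract_mem_Ico_logb_leadingDigit hb y
  have hmem : Set.Ico p
      (p + (Real.logb b (leadingDigit b ((b : ℝ) ^ y) + 1) - Int.fract y)) ∈ 𝓝[≥] p :=
    Ico_mem_nhdsGE (by linarith)
  filter_upwards [hmem] with x hx
  have hshift : x + (i : ℕ) * α = y + (x - p) := by rw [hy]; ring
  rw [digitWord, digitWord, hshift]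
  exact leadingDigit_rpow_add hb ⟨by linarith [hx.1], by linarith [hx.2]⟩

lemma exists_pos_nat_mul_add_int_mem_Ioo (hα : Irrational α) {x y : ℝ} (hxy : x < y) :
    ∃ m : ℕ, 0 < m ∧ ∃ z : ℤ, m * α + z ∈ Set.Ioo x y := by
  have hdense : DenseRange fun m : ℕ => m • (α : AddCircle (1 : ℝ)) := by
    rw [← denseRange_zsmul_iff_nsmul, AddCircle.denseRange_zsmul_coe_iff]
    simpa using hα
  -- shifting the target by `α` makes the multiple positive
  obtain ⟨m, w, hw, hwm⟩ := hdense.exists_mem_open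
    (QuotientAddGroup.isOpenMap_coe (Set.Ioo (x - α) (y - α)) isOpen_Ioo)
    ((Set.nonempty_Ioo.2 (by linarith)).image _)
  have hwm' : (w : AddCircle (1 : ℝ)) = ((m * α : ℝ) : AddCircle (1 : ℝ)) := by
    rw [← nsmul_eq_mul]
    exact hwm
  obtain ⟨z, hz⟩ := QuotientAddGroup.eq_iff_sub_mem.1 hwm'
  have hz' : (z : ℝ) = w - m * α := by simpa using hz
  refine ⟨m + 1, m.succ_pos, z, ?_, ?_⟩ <;> push_cast <;> linarith [hw.1, hw.2]

lemma leadingDigit_pow_add (hb : 1 < b) (ha : 0 < a) (m : ℕ) (i : Fin n) :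
    leadingDigit b (a ^ (m + (i : ℕ))) =
      digitWord b (Real.logb b a) n (m * Real.logb b a) i := by
  have hb' : (1 : ℝ) < b := by exact_mod_cast hb
  rw [digitWord, ← add_mul, mul_comm, Real.rpow_mul (by linarith),
    Real.rpow_logb (by linarith) hb'.ne' ha, ← Nat.cast_add, Real.rpow_natCast]

lemma setOf_blocks_eq_image_breakpoints (hb : 1 < b) (ha : 0 < a)
    (hα : Irrational (Real.logb b a)) (hn : 0 < n) :
    {w : Fin n → ℕ | ∃ m : ℕ, 1 ≤ m ∧ ∀ i : Fin n, w i = leadingDigit b (a ^ (m + (i : ℕ)))} =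
      digitWord b (Real.logb b a) n '' breakpoints b (Real.logb b a) n := by
  simp only [leadingDigit_pow_add hb ha, ← funext_iff]
  ext w
  constructor
  · rintro ⟨m, -, rfl⟩
    exact exists_mem_breakpoints_digitWord_eq hb hn _
  · rintro ⟨p, -, rfl⟩
    obtain ⟨u, hu, hconst⟩ := mem_nhdsGE_iff_exists_Ico_subset.1
      (eventually_digitWord_eq (α := Real.logb b a) (n := n) hb p)
    obtain ⟨m, hm, z, hmz⟩ := exists_pos_nat_mul_add_int_mem_Ioo hα hu
    refine ⟨m, hm, (hconst (Set.Ioo_subset_Ico_self hmz)).symm.trans ?_⟩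
    exact digitWord_congr hb (Int.fract_add_intCast _ z)

theorem blockComplexity_eq_card_breakpoints (hb : 4 < b) (ha : 0 < a)
    (hα : Irrational (Real.logb b a)) (hn : 0 < n) :
    blockComplexity a b n = (breakpoints b (Real.logb b a) n).card := by
  rw [blockComplexity, setOf_blocks_eq_image_breakpoints (by omega) ha hα hn,
    (injOn_digitWord hb hn).ncard_image, Set.ncard_coe_finset]

end Complexity

section Growth

variable {b : ℕ} {α : ℝ}

lemma injOn_fract_logb_sub (b : ℕ) (c : ℝ) :
    Set.InjOn (fun d : ℕ => Int.fract (Real.logb b d - c)) (Finset.Ioo 0 b) := by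
  intro d hd e he h
  obtain ⟨hd0, hdb⟩ := Finset.mem_Ioo.1 hd
  obtain ⟨he0, heb⟩ := Finset.mem_Ioo.1 he
  obtain ⟨z, hz⟩ := Int.fract_eq_fract.1 h
  have hlog : Real.logb b d = Real.logb b e := by
    rw [← fract_logb_natCast hd0 hdb, ← fract_logb_natCast he0 heb, Int.fract_eq_fract]
    exact ⟨z, by linarith⟩
  exact_mod_cast Real.logb_injOn_pos (by exact_mod_cast (show 1 < b by omega))
    (Set.mem_Ioi.2 (Nat.cast_pos.2 hd0)) (Set.mem_Ioi.2 (Nat.cast_pos.2 he0)) hlog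

lemma breakpoints_succ (b : ℕ) (α : ℝ) (n : ℕ) :
    breakpoints b α (n + 1) = breakpoints b α n ∪
      (Finset.Ioo 0 b).image fun d : ℕ => Int.fract (Real.logb b d - n * α) := by
  ext p
  simp only [Finset.mem_union, mem_breakpoints, Finset.mem_image, Finset.mem_Ioo,
    Nat.lt_succ_iff_lt_or_eq]
  grind

lemma card_breakpoints_add_le {n : ℕ} {R : Finset ℕ}
    (hR : ∀ d, 0 < d → d < b → Int.fract (Real.logb b d - n * α) ∈ breakpoints b α n → d ∈ R) :
    (breakpoints b α n).card + (b - 1) ≤ (breakpoints b α (n + 1)).card + R.card := by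
  set f : ℕ → ℝ := fun d => Int.fract (Real.logb b d - n * α)
  have hnew : ((Finset.Ioo 0 b).image f).card = b - 1 := by
    rw [Finset.card_image_of_injOn (injOn_fract_logb_sub b _), Nat.card_Ioo, Nat.sub_zero]
  have hold : breakpoints b α n ∩ (Finset.Ioo 0 b).image f ⊆ R.image f := by
    intro p hp
    obtain ⟨hp, hpf⟩ := Finset.mem_inter.1 hp
    obtain ⟨d, hd, rfl⟩ := Finset.mem_image.1 hpf
    obtain ⟨hd0, hdb⟩ := Finset.mem_Ioo.1 hd
    exact Finset.mem_image_of_mem f (hR d hd0 hdb hp)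
  rw [breakpoints_succ, ← hnew, ← Finset.card_union_add_card_inter]
  exact Nat.add_le_add_left ((Finset.card_le_card hold).trans Finset.card_image_le) _

lemma mul_succ_le_card_breakpoints {R : Finset ℕ}
    (hR : ∀ n d, 0 < d → d < b →
      Int.fract (Real.logb b d - n * α) ∈ breakpoints b α n → d ∈ R) (n : ℕ) :
    (b - 1) * (n + 1) ≤ (breakpoints b α (n + 1)).card + R.card * n := by
  induction n with
  | zero =>
    have h := card_breakpoints_add_le (n := 0) (α := α) (b := b) (R := ∅)
      fun d _ _ hd => by simp [breakpoints] at hd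
    rw [Finset.card_empty] at h
    omega
  | succ n ih =>
    have h := card_breakpoints_add_le (hR (n + 1))
    rw [mul_add_one, mul_add_one R.card]
    omega

lemma half_mul_succ_add_le_card_breakpoints {R : Finset ℕ}
    (hR : ∀ n d, 0 < d → d < b →
      Int.fract (Real.logb b d - n * α) ∈ breakpoints b α n → d ∈ R)
    (hcard : R.card ≤ b / 2) (n : ℕ) :
    (b - 1) / 2 * (n + 1) + b / 2 ≤ (breakpoints b α (n + 1)).card := by
  have hgrowth := mul_succ_le_card_breakpoints hR n
  have hhalves : (b - 1) * (n + 1) = (b - 1) / 2 * (n + 1) + b / 2 + b / 2 * n := by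
    rw [show b - 1 = (b - 1) / 2 + b / 2 by omega]
    grind
  linarith [Nat.mul_le_mul_right n hcard]

lemma div_eq_pow_mul_zpow_of_logb_sub_eq (hb : 1 < b) {a x y : ℝ} (ha : 0 < a) (hx : 0 < x)
    (hy : 0 < y) {i : ℕ} {z : ℤ} (h : Real.logb b x - Real.logb b y = i * Real.logb b a + z) :
    x / y = a ^ i * (b : ℝ) ^ z := by
  have hb' : (1 : ℝ) < b := by exact_mod_cast hb
  have hb0 : (0 : ℝ) < b := by linarith
  refine Real.logb_injOn_pos hb' (Set.mem_Ioi.2 (by positivity)) (Set.mem_Ioi.2 (by positivity)) ?_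
  rw [Real.logb_div hx.ne' hy.ne', h, Real.logb_mul (by positivity) (by positivity), Real.logb_pow,
    ← Real.rpow_intCast, Real.logb_rpow hb0 hb'.ne']

lemma exists_div_eq_of_fract_mem_breakpoints {a : ℝ} (ha : 0 < a) {n d : ℕ} (hd : 0 < d)
    (hdb : d < b)
    (h : Int.fract (Real.logb b d - n * Real.logb b a) ∈ breakpoints b (Real.logb b a) n) :
    ∃ e : ℕ, 0 < e ∧ e < b ∧ ∃ i ≠ 0, ∃ z : ℤ, (d : ℝ) / e = a ^ i * (b : ℝ) ^ z := by
  obtain ⟨j, hj, e, he, heb, hfract⟩ := mem_breakpoints.1 h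
  obtain ⟨z, hz⟩ := Int.fract_eq_fract.1 hfract.symm
  refine ⟨e, he, heb, n - j, by omega, z, ?_⟩
  refine div_eq_pow_mul_zpow_of_logb_sub_eq (by omega) ha (by positivity) (by positivity) ?_
  rw [Nat.cast_sub hj.le]
  linarith

end Growth

section RepeatableDigits

variable {b r s d e i : ℕ}

/-- The digits `d` for which `log_b d - n α`, with `α = log_b (r / s)` up to an integer, may already
be a breakpoint of `digitWord b α n`. -/
def repeatableDigits (b r s : ℕ) : Finset ℕ :=
  (Finset.Ioo 0 b).filter fun d => r ∣ d ∨ (r / Nat.gcd b r ∣ d ∧ d * s < r)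

lemma card_repeatableDigits_le (hs : 0 < s) :
    (repeatableDigits b r s).card ≤ (b - 1) / r + (Nat.gcd b r - 1) / s := by
  have hdigits : Finset.Ioo 0 b = Finset.Ioc 0 (b - 1) := by grind
  have hsmall : (Finset.Ioo 0 b).filter (fun d => r / Nat.gcd b r ∣ d ∧ d * s < r) ⊆
      (Finset.Ioc 0 ((Nat.gcd b r - 1) / s)).image (r / Nat.gcd b r * ·) := by
    intro d hd
    obtain ⟨hd, ⟨t, rfl⟩, hlt⟩ := Finset.mem_filter.1 hd
    have ht : 0 < t := Nat.pos_of_mul_pos_left (Finset.mem_Ioo.1 hd).1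
    have hts : t * s < Nat.gcd b r := by
      refine Nat.lt_of_mul_lt_mul_left (a := r / Nat.gcd b r) ?_
      rwa [Nat.div_mul_cancel (Nat.gcd_dvd_right b r), ← mul_assoc]
    refine Finset.mem_image_of_mem _ (Finset.mem_Ioc.2 ⟨ht, ?_⟩)
    rw [Nat.le_div_iff_mul_le hs]
    omega
  rw [repeatableDigits, Finset.filter_or]
  refine (Finset.card_union_le _ _).trans (Nat.add_le_add ?_ ?_)
  · rw [hdigits, Nat.Ioc_filter_dvd_card_eq_div]
  · exact (Finset.card_le_card hsmall).trans (Finset.card_image_le.trans_eq (by simp))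

lemma nonneg_of_div_eq_pow_mul_zpow {x : ℝ} (hx0 : 0 ≤ x) (hx1 : x ≤ 1) (hd : 0 < d)
    (he : 0 < e) (heb : e < b) {l : ℤ} (h : (d : ℝ) / e = x ^ i * (b : ℝ) ^ l) : 0 ≤ l := by
  have he' : (0 : ℝ) < e := by exact_mod_cast he
  have hb' : (1 : ℝ) < b := by exact_mod_cast (show 1 < b by omega)
  have hinv : (b : ℝ) ^ (-1 : ℤ) < (b : ℝ) ^ l :=
    calc (b : ℝ) ^ (-1 : ℤ) = 1 / b := by rw [zpow_neg_one, one_div]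
      _ < 1 / e := one_div_lt_one_div_of_lt he' (by exact_mod_cast heb)
      _ ≤ d / e := by gcongr; exact_mod_cast hd
      _ = x ^ i * (b : ℝ) ^ l := h
      _ ≤ (b : ℝ) ^ l := mul_le_of_le_one_left (by positivity) (pow_le_one₀ hx0 hx1)
  have := (zpow_lt_zpow_iff_right₀ hb').1 hinv
  omega

lemma dvd_of_mul_pow_eq_mul_pow {g b' r' l : ℕ} (hi : i ≠ 0) (hbr : Nat.Coprime b' (g * r'))
    (hrs : Nat.Coprime (g * r') s) (h : d * (b' * s) ^ i = e * r' ^ i * (g * b') ^ l) :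
    r' ∣ d ∧ (l ≠ 0 → g * r' ∣ d) := by
  have hdvd : r' ∣ e * r' ^ i := (dvd_pow_self r' hi).mul_left e
  have hco : Nat.Coprime (g * r') ((b' * s) ^ i) := (hbr.symm.mul_right hrs).pow_right i
  constructor
  · exact (hco.coprime_dvd_left (dvd_mul_left r' g)).dvd_of_dvd_mul_right (h ▸ hdvd.mul_right _)
  · intro hl
    have hg : g ∣ (g * b') ^ l := (dvd_mul_right g b').trans (dvd_pow_self _ hl)
    exact hco.dvd_of_dvd_mul_right (h ▸ mul_comm r' g ▸ mul_dvd_mul hdvd hg)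

lemma dvd_of_div_eq_pow_mul_pow (hb : 0 < b) (hs : 0 < s) (he : 0 < e) (hi : i ≠ 0)
    (hbr : Nat.Coprime (b / Nat.gcd b r) r) (hco : Nat.Coprime r s) {l : ℕ}
    (h : (d : ℝ) / e = ((r : ℝ) / (b * s)) ^ i * (b : ℝ) ^ l) :
    r / Nat.gcd b r ∣ d ∧ (l ≠ 0 → r ∣ d) := by
  have hg : 0 < Nat.gcd b r := Nat.gcd_pos_of_pos_left r hb
  have hb_eq : Nat.gcd b r * (b / Nat.gcd b r) = b := Nat.mul_div_cancel' (Nat.gcd_dvd_left b r)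
  have hr_eq : Nat.gcd b r * (r / Nat.gcd b r) = r := Nat.mul_div_cancel' (Nat.gcd_dvd_right b r)
  generalize Nat.gcd b r = g at *
  generalize b / g = b' at *
  generalize r / g = r' at *
  have hnat : d * (b' * s) ^ i = e * r' ^ i * (g * b') ^ l := by
    have hb' : 0 < b' := Nat.pos_of_mul_pos_left (hb_eq ▸ hb)
    have hreduced : (r : ℝ) / (b * s) = r' / (b' * s) := by
      rw [← hb_eq, ← hr_eq]
      push_cast
      field_simp
    rw [hreduced, div_pow, ← hb_eq] at h
    field_simp at h
    exact_mod_cast h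
  simpa only [hr_eq] using dvd_of_mul_pow_eq_mul_pow hi (hr_eq.symm ▸ hbr) (hr_eq.symm ▸ hco) hnat

lemma mem_repeatableDigits_of_div_eq (hbr : Nat.Coprime (b / Nat.gcd b r) r)
    (hr : 0 < r) (hco : Nat.Coprime r s) (hrb : r ≤ b * s) (hd : 0 < d) (hdb : d < b)
    (he : 0 < e) (heb : e < b) (hi : i ≠ 0) {l : ℤ}
    (h : (d : ℝ) / e = ((r : ℝ) / (b * s)) ^ i * (b : ℝ) ^ l) : d ∈ repeatableDigits b r s := by
  have hb : 0 < b := by omega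
  have hs : 0 < s := Nat.pos_of_mul_pos_left (hr.trans_le hrb)
  have hx0 : (0 : ℝ) ≤ r / (b * s) := by positivity
  have hx1 : (r : ℝ) / (b * s) ≤ 1 := (div_le_one (by positivity)).2 (by exact_mod_cast hrb)
  lift l to ℕ using nonneg_of_div_eq_pow_mul_zpow hx0 hx1 hd he heb h
  rw [zpow_natCast] at h
  obtain ⟨hdvd_cofactor, hdvd⟩ := dvd_of_div_eq_pow_mul_pow hb hs he hi hbr hco h
  refine Finset.mem_filter.2 ⟨Finset.mem_Ioo.2 ⟨hd, hdb⟩, ?_⟩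
  rcases ne_or_eq l 0 with hl | rfl
  · exact .inl (hdvd hl)
  · refine .inr ⟨hdvd_cofactor, ?_⟩
    have hle : (d : ℝ) / e ≤ r / (b * s) := by
      rw [h, pow_zero, mul_one]
      exact pow_le_of_le_one hx0 hx1 hi
    rw [div_le_div_iff₀ (by positivity) (by positivity)] at hle
    have hle' : d * (b * s) ≤ r * e := by exact_mod_cast hle
    nlinarith [Nat.mul_lt_mul_of_pos_left heb hr]

lemma mem_repeatableDigits_of_fract_mem_breakpoints {k : ℤ} {a : ℝ}
    (hbr : Nat.Coprime (b / Nat.gcd b r) r) (hr : 0 < r) (hco : Nat.Coprime r s) (hrb : r ≤ b * s)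
    (hrep : a = (r : ℝ) / s * (b : ℝ) ^ k) {n : ℕ} (hd : 0 < d) (hdb : d < b)
    (h : Int.fract (Real.logb b d - n * Real.logb b a) ∈ breakpoints b (Real.logb b a) n) :
    d ∈ repeatableDigits b r s := by
  have hb : (b : ℝ) ≠ 0 := by exact_mod_cast (show b ≠ 0 by omega)
  have hs : 0 < s := Nat.pos_of_mul_pos_left (hr.trans_le hrb)
  have ha : 0 < a := by rw [hrep]; positivity
  obtain ⟨e, he, heb, i, hi, z, hde⟩ := exists_div_eq_of_fract_mem_breakpoints ha hd hdb h
  have hshift : a = (r : ℝ) / (b * s) * (b : ℝ) ^ (k + 1) := by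
    rw [hrep, zpow_add_one₀ hb]
    field_simp
  refine mem_repeatableDigits_of_div_eq hbr hr hco hrb hd hdb he heb hi (l := (k + 1) * i + z) ?_
  rw [hde, hshift, mul_pow, zpow_add₀ hb _ z, zpow_mul, zpow_natCast, mul_assoc]

end RepeatableDigits

section Arithmetic

variable {b r s : ℕ}

lemma sub_one_div_add_gcd_sub_one_div_le (hsr : s < r) (hrb : r < b * s) :
    (b - 1) / r + (Nat.gcd b r - 1) / s ≤ b / 2 := by
  have hgr : Nat.gcd b r ≤ r := Nat.le_of_dvd (by omega) (Nat.gcd_dvd_right b r)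
  obtain ⟨c, hc⟩ := Nat.gcd_dvd_left b r
  have hs : 0 < s := Nat.pos_of_mul_pos_left (Nat.zero_lt_of_lt hrb)
  have hb : 0 < b := Nat.pos_of_mul_pos_right (Nat.zero_lt_of_lt hrb)
  generalize Nat.gcd b r = g at *
  have hg0 : g ≠ 0 := by rintro rfl; omega
  have hc0 : c ≠ 0 := by rintro rfl; omega
  rcases (show g = 1 ∨ c = 1 ∨ 2 ≤ g ∧ 2 ≤ c by omega) with rfl | rfl | ⟨hg2, hc2⟩
  · have : (b - 1) / r ≤ (b - 1) / 2 := Nat.div_le_div_left (by omega) two_pos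
    simp only [Nat.sub_self, Nat.zero_div]
    omega
  · have hs2 : 2 ≤ s := by
      by_contra! hs2
      obtain rfl : s = 1 := by omega
      omega
    have : (b - 1) / r = 0 := Nat.div_eq_of_lt (by omega)
    have : (g - 1) / s ≤ (g - 1) / 2 := Nat.div_le_div_left hs2 two_pos
    omega
  · have hfst : (b - 1) / r < c := by
      rw [Nat.div_lt_iff_lt_mul (by omega)]
      have : c * g ≤ c * r := Nat.mul_le_mul_left c hgr
      rw [mul_comm g c] at hc
      omega
    have hsnd : (g - 1) / s ≤ g - 1 := Nat.div_le_self _ _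
    have : 2 * g + 2 * c ≤ g * c + 4 := by nlinarith
    omega

lemma irrational_logb_div (hsf : Squarefree b) (hco : Nat.Coprime r s) (hsr : s < r)
    (hrb : r < b * s) : Irrational (Real.logb b ((r : ℝ) / s)) := by
  have hs : 0 < s := Nat.pos_of_mul_pos_left (Nat.zero_lt_of_lt hrb)
  have hb : (1 : ℝ) < b := by exact_mod_cast Nat.lt_of_mul_lt_mul_right (by omega : 1 * s < b * s)
  have hs' : (0 : ℝ) < s := by exact_mod_cast hs
  have hrs : (1 : ℝ) < r / s := (one_lt_div hs').2 (by exact_mod_cast hsr)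
  rintro ⟨q, hq⟩
  have hqpos : 0 < q := by
    have := Real.logb_pos hb hrs
    rw [← hq] at this
    exact_mod_cast this
  obtain ⟨N, hN⟩ := Int.eq_ofNat_of_zero_le (Rat.num_nonneg.2 hqpos.le)
  have hN0 : N ≠ 0 := by
    have := Rat.num_pos.2 hqpos
    omega
  have hpow : ((r : ℝ) / s) ^ q.den = (b : ℝ) ^ N := by
    have hden : (q : ℝ) * q.den = N := by
      have := Rat.mul_den_eq_num q
      rw [hN] at this
      exact_mod_cast this
    rw [← Real.rpow_logb (by linarith) hb.ne' (by linarith : (0 : ℝ) < r / s), ← hq,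
      ← Real.rpow_natCast, ← Real.rpow_mul (by linarith), hden, Real.rpow_natCast]
  have hnat : r ^ q.den = b ^ N * s ^ q.den := by
    rw [div_pow, div_eq_iff (by positivity)] at hpow
    exact_mod_cast hpow
  have hs1 : s = 1 := Nat.Coprime.eq_one_of_dvd (hco.symm.pow_right q.den)
    (hnat ▸ (dvd_pow_self s q.den_nz).mul_left _)
  have hbr : b ∣ r := (hsf.dvd_pow_iff_dvd q.den_nz).1 (hnat ▸ (dvd_pow_self b hN0).mul_right _)
  have := Nat.le_of_dvd (by omega) hbr
  rw [hs1] at hrb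
  omega

lemma irrational_logb_div_mul_zpow (hsf : Squarefree b) (hco : Nat.Coprime r s) (hsr : s < r)
    (hrb : r < b * s) (k : ℤ) : Irrational (Real.logb b ((r : ℝ) / s * (b : ℝ) ^ k)) := by
  have hs : 0 < s := Nat.pos_of_mul_pos_left (Nat.zero_lt_of_lt hrb)
  have hb : 1 < b := Nat.lt_of_mul_lt_mul_right (by omega : 1 * s < b * s)
  have hr : 0 < r := by omega
  rw [Real.logb_mul (by positivity) (by positivity), ← Real.rpow_intCast,
    Real.logb_rpow (by positivity) (by exact_mod_cast hb.ne')]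
  exact (irrational_logb_div hsf hco hsr hrb).add_intCast k

end Arithmetic

/-- Extreme values: With `b ≥ 5` squarefree, `a` a positive rational
not an integral power of `b`, and `a = (r/s)·b^k` in lowest terms with `1 < r/s < b`,
the slope `c_{a,b} = b - 1 - ⌊(b-1)/r⌋ - ⌊(gcd(b,r)-1)/s⌋` satisfies
`⌊(b-1)/2⌋ ≤ c_{a,b} ≤ b - 1`, and `⌊(b-1)/2⌋·n + ⌈(b-1)/2⌉ ≤ p_{a,b}(n) ≤ (b-1)·n`. -/
theorem blockComplexity_extreme (b : ℕ) (hb : 5 ≤ b) (hsf : Squarefree b)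
    (a : ℚ) (ha : 0 < a) (hnp : ∀ j : ℤ, (a : ℝ) ≠ (b : ℝ) ^ j)
    (r s : ℕ) (k : ℤ) (hr : 0 < r) (hs : 0 < s) (hco : Nat.Coprime r s)
    (hrep : (a : ℝ) = ((r : ℝ) / s) * (b : ℝ) ^ k)
    (h1 : (s : ℝ) < r) (h2 : (r : ℝ) < (b : ℝ) * s) :
    (((b - 1) / 2 : ℕ) : ℤ) ≤
        (b : ℤ) - 1 - ((b - 1) / r : ℕ) - ((Nat.gcd b r - 1) / s : ℕ) ∧
      (b : ℤ) - 1 - ((b - 1) / r : ℕ) - ((Nat.gcd b r - 1) / s : ℕ) ≤ (b : ℤ) - 1 ∧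
      ∀ n : ℕ, 1 ≤ n →
        (b - 1) / 2 * n + ((b - 1) + 1) / 2 ≤ blockComplexity (a : ℝ) b n ∧
          blockComplexity (a : ℝ) b n ≤ (b - 1) * n := by
  have h1' : s < r := by exact_mod_cast h1
  have h2' : r < b * s := by exact_mod_cast h2
  have ha' : (0 : ℝ) < a := by exact_mod_cast ha
  have hirr : Irrational (Real.logb b a) := hrep ▸ irrational_logb_div_mul_zpow hsf hco h1' h2' k
  have hbr := Nat.coprime_div_gcd_of_squarefree hsf hr.ne'
  have hslope := sub_one_div_add_gcd_sub_one_div_le h1' h2'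
  have hcard := (card_repeatableDigits_le hs).trans hslope
  refine ⟨by omega, by rw [sub_sub]; exact sub_le_self _ (by positivity), fun n hn => ?_⟩
  rw [blockComplexity_eq_card_breakpoints hb ha' hirr hn, Nat.sub_add_cancel (by omega)]
  refine ⟨?_, card_breakpoints_le _ _ _⟩
  obtain ⟨m, rfl⟩ := Nat.exists_eq_add_of_le' hn
  exact half_mul_succ_add_le_card_breakpoints (fun _ _ =>
    mem_repeatableDigits_of_fract_mem_breakpoints hbr hr hco h2'.le hrep) hcard m
end
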